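/- Let (Ω, μ) be a standard Borel probability space with an ergodic measure-preserving transformation T : Ω → Ω, and let X be a compact metric space. Let S : Ω × X → Ω × X be of the form S(ω, x) = (Tω, g_ω x), where for μ-a.e. ω, g_ω is a homeomorphism of X, and S is measurable. Let f : Ω × X → ℝ be measurable with f(ω, ·) : X → ℝ continuous for μ-a.e. ω, and with ω ↦ sup_{x ∈ X} |f(ω, x)| integrable. Define f_n(ω, x) := Σ_{i=0}^{n−1} f(S^i(ω, x)) and F_n(ω) := sup_{x ∈ X} f_n(ω, x). Then F_{n+m}(ω) ≤ F_n(ω) + F_m(T^n ω) for a.e. ω and all n, m ≥ 1, so (1/N) F_N(ω) converges for μ-a.e. ω to a constant l; and there exists an S-invariant Borel probability measure η on Ω × X whose projection to Ω equals μ and such that ∫_{Ω × X} f dη ≥ l. -/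

import Mathlib

open MeasureTheory Filter Topology

section Ergodic

variable {α : Type*}

/-- The running maximum of the Birkhoff sums of `f` of length at most `n`. -/
def birkhoffMax (T : α → α) (f : α → ℝ) : ℕ → α → ℝ
  | 0, _ => 0
  | n + 1, x => max 0 (f x + birkhoffMax T f n (T x))

lemma birkhoffMax_nonneg (T : α → α) (f : α → ℝ) (n : ℕ) (x : α) : 0 ≤ birkhoffMax T f n x := by
  cases n with
  | zero => exact le_rfl
  | succ n => exact le_max_left _ _

lemma birkhoffMax_le_succ (T : α → α) (f : α → ℝ) (n : ℕ) (x : α) :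
    birkhoffMax T f n x ≤ birkhoffMax T f (n + 1) x := by
  induction n generalizing x with
  | zero => exact birkhoffMax_nonneg T f 1 x
  | succ n ih => exact max_le_max le_rfl (add_le_add le_rfl (ih (T x)))

lemma birkhoffSum_le_birkhoffMax (T : α → α) (f : α → ℝ) (n : ℕ) (x : α) :
    birkhoffSum T f n x ≤ birkhoffMax T f n x := by
  induction n generalizing x with
  | zero => simp [birkhoffMax]
  | succ n ih =>
    rw [birkhoffSum_succ']
    exact (add_le_add le_rfl (ih (T x))).trans (le_max_right _ _)

variable [MeasurableSpace α] {μ : Measure α} {T : α → α} {f : α → ℝ}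

lemma integrable_birkhoffMax (hT : MeasurePreserving T μ μ) (hf : Integrable f μ) (n : ℕ) :
    Integrable (birkhoffMax T f n) μ := by
  induction n with
  | zero => exact integrable_zero α ℝ μ
  | succ n ih =>
    have h := (integrable_zero α ℝ μ).sup (hf.add (hT.integrable_comp_of_integrable ih))
    exact h

/-- **Maximal ergodic theorem**, when some Birkhoff sum is positive almost everywhere. -/
lemma integral_nonneg_of_ae_exists_birkhoffSum_pos (hT : MeasurePreserving T μ μ)
    (hf : Integrable f μ) (hpos : ∀ᵐ x ∂μ, ∃ n, 0 < birkhoffSum T f n x) :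
    0 ≤ ∫ x, f x ∂μ := by
  let A : ℕ → Set α := fun n => {x | 0 < birkhoffMax T f (n + 1) x}
  have hA : ∀ n, NullMeasurableSet (A n) μ := fun n =>
    nullMeasurableSet_lt aemeasurable_const (integrable_birkhoffMax hT hf _).aemeasurable
  have hmono : ∀ x, Monotone fun n => birkhoffMax T f n x := fun x =>
    monotone_nat_of_le_succ fun n => birkhoffMax_le_succ T f n x
  have hlim : Tendsto (fun n => ∫ x, (A n).indicator f x ∂μ) atTop (𝓝 (∫ x, f x ∂μ)) := by
    refine tendsto_integral_of_dominated_convergence (fun x => ‖f x‖)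
      (fun n => hf.1.indicator₀ (hA n)) hf.norm
      (fun n => Eventually.of_forall fun x => norm_indicator_le_norm_self f x) ?_
    filter_upwards [hpos] with x ⟨m, hm⟩
    refine tendsto_const_nhds.congr' ?_
    filter_upwards [eventually_ge_atTop m] with n hn
    have : x ∈ A n := hm.trans_le ((birkhoffSum_le_birkhoffMax T f m x).trans
      (hmono x (hn.trans n.le_succ)))
    rw [Set.indicator_of_mem this]
  refine ge_of_tendsto' hlim fun n => ?_
  have hM := integrable_birkhoffMax hT hf (n + 1)
  have hzero : ∫ x, (birkhoffMax T f (n + 1) x - birkhoffMax T f (n + 1) (T x)) ∂μ = 0 := by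
    have hcomp : ∫ x, birkhoffMax T f (n + 1) (T x) ∂μ = ∫ x, birkhoffMax T f (n + 1) x ∂μ := by
      have h := integral_map (μ := μ) hT.aemeasurable
        (f := birkhoffMax T f (n + 1)) (by rw [hT.map_eq]; exact hM.1)
      rw [hT.map_eq] at h
      exact h.symm
    have h := integral_sub hM (hT.integrable_comp_of_integrable hM)
    simp only [Function.comp_apply] at h
    rw [h, hcomp, sub_self]
  rw [← hzero]
  refine integral_mono (hM.sub (hT.integrable_comp_of_integrable hM))
    (hf.indicator₀ (hA n)) fun x => ?_
  by_cases hx : x ∈ A n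
  · have h1 : birkhoffMax T f (n + 1) x = f x + birkhoffMax T f n (T x) := by
      have hx' : 0 < max 0 (f x + birkhoffMax T f n (T x)) := hx
      exact max_eq_right (le_of_lt ((lt_max_iff.1 hx').resolve_left (lt_irrefl 0)))
    have h2 := birkhoffMax_le_succ T f n (T x)
    simp only [Set.indicator_of_mem hx]
    linarith
  · have h1 : birkhoffMax T f (n + 1) x ≤ 0 := not_lt.1 hx
    have h2 := birkhoffMax_nonneg T f (n + 1) (T x)
    simp only [Set.indicator_of_notMem hx]
    linarith

lemma nullMeasurableSet_bddAbove_range {u : ℕ → α → ℝ} (hu : ∀ n, AEMeasurable (u n) μ) :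
    NullMeasurableSet {x | BddAbove (Set.range fun n => u n x)} μ := by
  have : {x | BddAbove (Set.range fun n => u n x)} = ⋃ k : ℕ, ⋂ n, {x | u n x ≤ k} := by
    ext x
    simp only [Set.mem_ofPred_eq, Set.mem_iUnion, Set.mem_iInter]
    constructor
    · rintro ⟨B, hB⟩
      obtain ⟨k, hk⟩ := exists_nat_ge B
      exact ⟨k, fun n => (hB ⟨n, rfl⟩).trans hk⟩
    · rintro ⟨k, hk⟩
      exact ⟨k, by rintro _ ⟨n, rfl⟩; exact hk n⟩
  rw [this]
  exact .iUnion fun k => .iInter fun n => nullMeasurableSet_le (hu n) aemeasurable_const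

lemma aemeasurable_birkhoffSum (hT : MeasurePreserving T μ μ) (hf : AEMeasurable f μ) (n : ℕ) :
    AEMeasurable (birkhoffSum T f n) μ := by
  have : birkhoffSum T f n = fun x => ∑ i ∈ Finset.range n, f (T^[i] x) := rfl
  rw [this]
  exact Finset.aemeasurable_fun_sum _ fun i _ =>
    hf.comp_quasiMeasurePreserving (hT.iterate i).quasiMeasurePreserving

lemma ae_forall_iterate (hT : MeasurePreserving T μ μ) {p : α → Prop} (hp : ∀ᵐ x ∂μ, p x) :
    ∀ᵐ x ∂μ, ∀ n, p (T^[n] x) :=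
  ae_all_iff.2 fun n => (hT.iterate n).quasiMeasurePreserving.ae hp

variable [IsProbabilityMeasure μ]

lemma Ergodic.ae_bddAbove_birkhoffSum_sub (hT : Ergodic T μ) (hf : Integrable f μ) {a : ℝ}
    (ha : ∫ x, f x ∂μ < a) :
    ∀ᵐ x ∂μ, BddAbove (Set.range fun n : ℕ => birkhoffSum T f n x - n * a) := by
  set E : Set α := {x | BddAbove (Set.range fun n : ℕ => birkhoffSum T f n x - n * a)}
  have hEm : NullMeasurableSet E μ := nullMeasurableSet_bddAbove_range fun n =>
    (aemeasurable_birkhoffSum hT.toMeasurePreserving hf.aemeasurable n).sub_const _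
  have hle : T ⁻¹' E ≤ᵐ[μ] E := by
    refine Eventually.of_forall fun x hx => ?_
    obtain ⟨B, hB⟩ := hx
    refine ⟨max 0 (B + f x - a), ?_⟩
    rintro _ ⟨n, rfl⟩
    cases n with
    | zero => simp
    | succ n =>
      have h : birkhoffSum T f n (T x) - n * a ≤ B := hB ⟨n, rfl⟩
      refine le_max_of_le_right ?_
      simp only [birkhoffSum_succ', Nat.cast_succ]
      linarith
  rcases hT.ae_empty_or_univ_of_preimage_ae_le hEm hle with h | h
  · exfalso
    have hpos : ∀ᵐ x ∂μ, ∃ n, 0 < birkhoffSum T (fun y => f y - a) n x := by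
      filter_upwards [h] with x hx
      have hx' : ¬ BddAbove (Set.range fun n : ℕ => birkhoffSum T f n x - n * a) := by
        have hxE : (x ∈ E) = False := hx
        exact of_eq_false hxE
      rw [not_bddAbove_iff] at hx'
      obtain ⟨_, ⟨n, rfl⟩, hn⟩ := hx' 0
      exact ⟨n, by simpa [birkhoffSum, Finset.sum_sub_distrib] using hn⟩
    have hint : 0 ≤ ∫ x, (f x - a) ∂μ := integral_nonneg_of_ae_exists_birkhoffSum_pos
      hT.toMeasurePreserving (hf.sub (integrable_const a)) hpos
    rw [integral_sub hf (integrable_const a), integral_const, probReal_univ, one_smul] at hint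
    linarith
  · filter_upwards [h] with x hx
    have hxE : (x ∈ E) = True := hx
    exact of_eq_true hxE

lemma eventually_lt_div_natCast_of_bddBelow {u : ℕ → ℝ} {l a : ℝ}
    (hlb : ∀ q : ℚ, q < l → BddBelow (Set.range fun n : ℕ => u n - n * q)) (ha : a < l) :
    ∀ᶠ n : ℕ in atTop, a < u n / n := by
  obtain ⟨q, haq, hq⟩ := exists_rat_btwn ha
  obtain ⟨B, hB⟩ := hlb q hq
  have hsmall : Tendsto (fun n : ℕ => B / n) atTop (𝓝 0) :=
    tendsto_const_nhds.div_atTop tendsto_natCast_atTop_atTop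
  filter_upwards [hsmall.eventually_const_lt (show a - q < 0 by linarith),
    eventually_gt_atTop 0] with n hn hn0
  have hn0' : (0 : ℝ) < n := Nat.cast_pos.2 hn0
  have h : B ≤ u n - n * q := hB ⟨n, rfl⟩
  rw [lt_div_iff₀ hn0'] at hn ⊢
  linarith

/-- The lower half of Birkhoff's pointwise ergodic theorem. -/
lemma Ergodic.ae_forall_eventually_lt_birkhoffSum_div (hT : Ergodic T μ) (hf : Integrable f μ) :
    ∀ᵐ x ∂μ, ∀ a < ∫ y, f y ∂μ, ∀ᶠ n : ℕ in atTop, a < birkhoffSum T f n x / n := by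
  have hlb : ∀ᵐ x ∂μ, ∀ q : ℚ, q < ∫ y, f y ∂μ →
      BddBelow (Set.range fun n : ℕ => birkhoffSum T f n x - n * q) := by
    rw [ae_all_iff]
    intro q
    by_cases hq : q < ∫ y, f y ∂μ
    · have hq' : ∫ y, (-f) y ∂μ < -q := by
        simp only [Pi.neg_apply, integral_neg]
        linarith
      filter_upwards [hT.ae_bddAbove_birkhoffSum_sub hf.neg hq'] with x ⟨B, hB⟩ _
      refine ⟨-B, ?_⟩
      rintro _ ⟨n, rfl⟩
      have h : birkhoffSum T (-f) n x - n * (-q) ≤ B := hB ⟨n, rfl⟩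
      simp only [birkhoffSum_neg] at h
      linarith
    · exact Eventually.of_forall fun x h => absurd h hq
  filter_upwards [hlb] with x hx a ha using eventually_lt_div_natCast_of_bddBelow hx ha

/-- **Birkhoff's pointwise ergodic theorem** for an ergodic map. -/
lemma Ergodic.ae_tendsto_birkhoffSum_div (hT : Ergodic T μ) (hf : Integrable f μ) :
    ∀ᵐ x ∂μ, Tendsto (fun n : ℕ => birkhoffSum T f n x / n) atTop (𝓝 (∫ y, f y ∂μ)) := by
  filter_upwards [hT.ae_forall_eventually_lt_birkhoffSum_div hf,
    hT.ae_forall_eventually_lt_birkhoffSum_div hf.neg] with x h1 h2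
  refine tendsto_order.2 ⟨h1, fun a ha => ?_⟩
  have ha' : -a < ∫ y, (-f) y ∂μ := by
    simp only [Pi.neg_apply, integral_neg]
    linarith
  filter_upwards [h2 (-a) ha'] with n hn
  rw [birkhoffSum_neg, neg_div] at hn
  linarith

end Ergodic

section Caratheodory

variable {Ω X : Type*} [MeasurableSpace Ω] [MetricSpace X] [MeasurableSpace X]
  {μ : Measure Ω} {φ : Ω × X → ℝ}

/-- A jointly measurable function on `Ω × X`, continuous on almost every fibre and dominated
fibrewise by an integrable function on `Ω`. -/
structure IsCaratheodory (μ : Measure Ω) (φ : Ω × X → ℝ) : Prop where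
  measurable : Measurable φ
  ae_continuous : ∀ᵐ ω ∂μ, Continuous fun x => φ (ω, x)
  exists_bound : ∃ b : Ω → ℝ, Integrable b μ ∧ ∀ᵐ ω ∂μ, ∀ x, |φ (ω, x)| ≤ b ω

namespace IsCaratheodory

lemma integrable (hφ : IsCaratheodory μ φ) {η : Measure (Ω × X)} (hη : η.map Prod.fst = μ) :
    Integrable φ η := by
  obtain ⟨b, hb, hle⟩ := hφ.exists_bound
  subst hη
  refine (hb.comp_measurable measurable_fst).mono' hφ.measurable.aestronglyMeasurable ?_
  filter_upwards [ae_of_ae_map measurable_fst.aemeasurable hle] with p hp using hp p.2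

lemma sum {ι : Type*} {s : Finset ι} {ψ : ι → Ω × X → ℝ} (h : ∀ i ∈ s, IsCaratheodory μ (ψ i)) :
    IsCaratheodory μ fun p => ∑ i ∈ s, ψ i p where
  measurable := Finset.measurable_fun_sum _ fun i hi => (h i hi).measurable
  ae_continuous := by
    have : ∀ᵐ ω ∂μ, ∀ i ∈ s, Continuous fun x => ψ i (ω, x) :=
      (ae_ball_iff s.countable_toSet).2 fun i hi => (h i hi).ae_continuous
    filter_upwards [this] with ω hω using continuous_finsetSum _ hω
  exists_bound := by
    classical
    have : ∀ i, ∃ b : Ω → ℝ, i ∈ s → Integrable b μ ∧ ∀ᵐ ω ∂μ, ∀ x, |ψ i (ω, x)| ≤ b ω := by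
      intro i
      by_cases hi : i ∈ s
      · obtain ⟨b, hb⟩ := (h i hi).exists_bound
        exact ⟨b, fun _ => hb⟩
      · exact ⟨0, fun h => absurd h hi⟩
    choose b hb using this
    refine ⟨fun ω => ∑ i ∈ s, b i ω, integrable_finsetSum _ fun i hi => (hb i hi).1, ?_⟩
    have hle : ∀ᵐ ω ∂μ, ∀ i ∈ s, ∀ x, |ψ i (ω, x)| ≤ b i ω :=
      (ae_ball_iff s.countable_toSet).2 fun i hi => (hb i hi).2
    filter_upwards [hle] with ω hω x
    exact (Finset.abs_sum_le_sum_abs _ _).trans (Finset.sum_le_sum fun i hi => hω i hi x)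

variable [CompactSpace X]

lemma ae_le_iSup (hφ : IsCaratheodory μ φ) : ∀ᵐ ω ∂μ, ∀ x, φ (ω, x) ≤ ⨆ y, φ (ω, y) := by
  filter_upwards [hφ.ae_continuous] with ω hω x
  exact le_ciSup (f := fun y => φ (ω, y)) (isCompact_range hω).bddAbove x

variable [Nonempty X]

lemma ae_iSup_eq (hφ : IsCaratheodory μ φ) :
    ∀ᵐ ω ∂μ, ⨆ x, φ (ω, x) = ⨆ k, φ (ω, TopologicalSpace.denseSeq X k) := by
  filter_upwards [hφ.ae_continuous] with ω hω
  rw [← (TopologicalSpace.denseRange_denseSeq X).ciSup hω (isCompact_range hω).bddAbove]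
  exact iSup_range' (fun x => φ (ω, x)) _

lemma measurable_iSup_denseSeq (hφ : Measurable φ) :
    Measurable fun ω => ⨆ k, φ (ω, TopologicalSpace.denseSeq X k) :=
  .iSup fun _ => hφ.comp measurable_prodMk_right

lemma integrable_iSup (hφ : IsCaratheodory μ φ) : Integrable (fun ω => ⨆ x, φ (ω, x)) μ := by
  obtain ⟨b, hb, hle⟩ := hφ.exists_bound
  refine hb.mono' ⟨_, (measurable_iSup_denseSeq hφ.measurable).stronglyMeasurable,
    hφ.ae_iSup_eq⟩ ?_
  filter_upwards [hle, hφ.ae_le_iSup] with ω h1 h2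
  let x := Classical.arbitrary X
  exact abs_le.2 ⟨(abs_le.1 (h1 x)).1.trans (h2 x), ciSup_le fun y => (abs_le.1 (h1 y)).2⟩

/-- Near-maximizers of a Carathéodory integrand may be selected measurably. -/
lemma exists_measure_integral_ge [IsProbabilityMeasure μ] (hφ : IsCaratheodory μ φ) :
    ∃ ν : Measure (Ω × X), IsProbabilityMeasure ν ∧ ν.map Prod.fst = μ ∧
      ∫ ω, ⨆ x, φ (ω, x) ∂μ - 1 ≤ ∫ p, φ p ∂ν := by
  classical
  let d := TopologicalSpace.denseSeq X
  have hex : ∀ ω, ∃ k, (⨆ k, φ (ω, d k)) - 1 < φ (ω, d k) := by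
    intro ω
    by_cases hb : BddAbove (Set.range fun k => φ (ω, d k))
    · exact exists_lt_of_lt_ciSup (sub_one_lt _)
    · obtain ⟨_, ⟨k, rfl⟩, hk⟩ := not_bddAbove_iff.1 hb (-1)
      refine ⟨k, ?_⟩
      rw [Real.iSup_of_not_bddAbove hb]
      simpa using hk
  have hsel : Measurable fun ω => (ω, d (Nat.find (hex ω))) :=
    measurable_id.prodMk (measurable_from_nat.comp (measurable_find hex fun k =>
      measurableSet_lt ((measurable_iSup_denseSeq hφ.measurable).sub_const 1)
        (hφ.measurable.comp measurable_prodMk_right)))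
  have hfst : (μ.map fun ω => (ω, d (Nat.find (hex ω)))).map Prod.fst = μ := by
    rw [Measure.map_map measurable_fst hsel]
    exact Measure.map_id
  refine ⟨_, Measure.isProbabilityMeasure_map hsel.aemeasurable, hfst, ?_⟩
  have hint := (hφ.integrable hfst).comp_measurable hsel
  rw [integral_map hsel.aemeasurable hφ.measurable.aestronglyMeasurable]
  have hone : ∫ ω, ((⨆ x, φ (ω, x)) - 1) ∂μ = ∫ ω, ⨆ x, φ (ω, x) ∂μ - 1 := by
    rw [integral_sub hφ.integrable_iSup (integrable_const 1), integral_const, probReal_univ,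
      one_smul]
  rw [← hone]
  refine integral_mono_ae (hφ.integrable_iSup.sub (integrable_const 1)) hint ?_
  filter_upwards [hφ.ae_iSup_eq] with ω hω
  simp only [hω]
  exact (Nat.find_spec (hex ω)).le

/-- A Carathéodory integrand is an integrable family of continuous functions. -/
lemma exists_integrable_continuousMap (hφ : IsCaratheodory μ φ) :
    ∃ Φ : Ω → C(X, ℝ), Integrable Φ μ ∧ ∀ᵐ ω ∂μ, ∀ x, Φ ω x = φ (ω, x) := by
  classical
  obtain ⟨A, hA, hAm, hA0⟩ := exists_measurable_superset_of_null (ae_iff.1 hφ.ae_continuous)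
  have hcont : ∀ ω, Continuous fun x => if ω ∈ A then (0 : ℝ) else φ (ω, x) := by
    intro ω
    by_cases hω : ω ∈ A
    · simpa [hω] using continuous_const
    · simp only [hω, if_false]
      by_contra h
      exact hω (hA h)
  let Φ : Ω → C(X, ℝ) := fun ω => ⟨_, hcont ω⟩
  have hΦ : ∀ᵐ ω ∂μ, ∀ x, Φ ω x = φ (ω, x) := by
    have : ∀ᵐ ω ∂μ, ω ∉ A := measure_eq_zero_iff_ae_notMem.1 hA0
    filter_upwards [this] with ω hω x
    simp [Φ, hω]
  borelize C(X, ℝ)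
  have hemb : MeasurableEmbedding fun (u : C(X, ℝ)) (k : ℕ) =>
      u (TopologicalSpace.denseSeq X k) := by
    refine Continuous.measurableEmbedding
      (continuous_pi fun k => continuous_eval_const _) fun u v huv => ?_
    refine ContinuousMap.coe_injective
      ((TopologicalSpace.denseRange_denseSeq X).equalizer u.continuous v.continuous ?_)
    exact huv
  have hmeas : Measurable Φ := by
    refine hemb.measurable_comp_iff.1 (measurable_pi_lambda _ fun k => ?_)
    exact Measurable.ite hAm measurable_const (hφ.measurable.comp measurable_prodMk_right)
  obtain ⟨b, hb, hle⟩ := hφ.exists_bound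
  refine ⟨Φ, hb.mono' hmeas.aestronglyMeasurable ?_, hΦ⟩
  filter_upwards [hle, hΦ] with ω h1 h2
  refine (ContinuousMap.norm_le_of_nonempty _).2 fun x => ?_
  rw [h2, Real.norm_eq_abs]
  exact h1 x

section Limit

variable [TopologicalSpace Ω] [PolishSpace Ω] [BorelSpace Ω] [BorelSpace X] [IsProbabilityMeasure μ]

/-- Weak convergence of measures with a fixed marginal may be tested on Carathéodory integrands. -/
lemma tendsto_integral (hφ : IsCaratheodory μ φ) {ι : Type*} {L : Filter ι}
    {ηs : ι → ProbabilityMeasure (Ω × X)} {η : ProbabilityMeasure (Ω × X)}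
    (hlim : Tendsto ηs L (𝓝 η)) (hηs : ∀ i, (ηs i : Measure (Ω × X)).map Prod.fst = μ)
    (hη : (η : Measure (Ω × X)).map Prod.fst = μ) :
    Tendsto (fun i => ∫ p, φ p ∂(ηs i : Measure (Ω × X))) L
      (𝓝 (∫ p, φ p ∂(η : Measure (Ω × X)))) := by
  obtain ⟨Φ, hΦ, hΦφ⟩ := hφ.exists_integrable_continuousMap
  rw [Metric.tendsto_nhds]
  intro ε hε
  obtain ⟨ψ, hψ, hψint⟩ :=
    hΦ.exists_boundedContinuous_integral_sub_le (show 0 < ε / 3 by positivity)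
  let ψ' : BoundedContinuousFunction (Ω × X) ℝ :=
    BoundedContinuousFunction.ofNormedAddCommGroup (fun p => ψ p.1 p.2)
      (by fun_prop) ‖ψ‖
      fun p => ((ψ p.1).norm_coe_le_norm p.2).trans (ψ.norm_coe_le_norm p.1)
  have key : ∀ ν : ProbabilityMeasure (Ω × X), (ν : Measure (Ω × X)).map Prod.fst = μ →
      |∫ p, φ p ∂(ν : Measure (Ω × X)) - ∫ p, ψ' p ∂(ν : Measure (Ω × X))| ≤ ε / 3 := by
    intro ν hν
    rw [← integral_sub (hφ.integrable hν) (ψ'.integrable _)]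
    have hint : Integrable (fun ω => ‖Φ ω - ψ ω‖)
        ((ν : Measure (Ω × X)).map Prod.fst) := hν.symm ▸ (hΦ.sub hψint).norm
    have hΦφ' : ∀ᵐ ω ∂((ν : Measure (Ω × X)).map Prod.fst), ∀ x, Φ ω x = φ (ω, x) :=
      hν.symm ▸ hΦφ
    calc |∫ p, (φ p - ψ' p) ∂(ν : Measure (Ω × X))|
        ≤ ∫ p, ‖Φ p.1 - ψ p.1‖ ∂(ν : Measure (Ω × X)) := by
          rw [← Real.norm_eq_abs]
          refine norm_integral_le_of_norm_le (hint.comp_measurable measurable_fst) ?_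
          filter_upwards [ae_of_ae_map measurable_fst.aemeasurable hΦφ'] with p hp
          have := (Φ p.1 - ψ p.1).norm_coe_le_norm p.2
          rwa [ContinuousMap.sub_apply, hp] at this
      _ = ∫ ω, ‖Φ ω - ψ ω‖ ∂μ := by
          have h := integral_map (μ := (ν : Measure (Ω × X))) measurable_fst.aemeasurable hint.1
          rw [hν] at h
          exact h.symm
      _ ≤ ε / 3 := hψ
  have hψ' := ProbabilityMeasure.tendsto_iff_forall_integral_tendsto.1 hlim ψ'
  filter_upwards [Metric.tendsto_nhds.1 hψ' (ε / 3) (by positivity)] with i hi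
  have h1 := abs_le.1 (key (ηs i) (hηs i))
  have h2 := abs_le.1 (key η hη)
  rw [Real.dist_eq, abs_lt] at hi ⊢
  constructor <;> linarith [h1.1, h1.2, h2.1, h2.2, hi.1, hi.2]

end Limit

end IsCaratheodory

end Caratheodory

section SkewProduct

variable {Ω X : Type*} {T : Ω → Ω} {g : Ω → X → X} {f : Ω × X → ℝ}

/-- The skew product over `T` with fibre maps `g ω`. -/
def skewProduct (T : Ω → Ω) (g : Ω → X → X) (p : Ω × X) : Ω × X := (T p.1, g p.1 p.2)

lemma fst_iterate_skewProduct (n : ℕ) (p : Ω × X) : ((skewProduct T g)^[n] p).1 = T^[n] p.1 :=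
  Function.Semiconj.iterate_right (f := Prod.fst) (ga := skewProduct T g) (gb := T)
    (fun _ => rfl) n p

lemma iterate_skewProduct_eq (n : ℕ) (p : Ω × X) :
    (skewProduct T g)^[n] p = (T^[n] p.1, ((skewProduct T g)^[n] p).2) :=
  Prod.ext (fst_iterate_skewProduct n p) rfl

lemma birkhoffSum_skewProduct_add (n m : ℕ) (ω : Ω) (x : X) :
    birkhoffSum (skewProduct T g) f (n + m) (ω, x) =
      birkhoffSum (skewProduct T g) f n (ω, x) + birkhoffSum (skewProduct T g) f m
        (T^[n] ω, ((skewProduct T g)^[n] (ω, x)).2) := by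
  rw [birkhoffSum_add, ← iterate_skewProduct_eq n (ω, x)]

/-- Averaging the Birkhoff sums of length `n` along an orbit recovers `n` times the long Birkhoff
sum, up to boundary terms. -/
lemma sum_birkhoffSum_iterate {α : Type*} (S : α → α) (f : α → ℝ) (n N : ℕ) (p : α) :
    ∑ j ∈ Finset.range N, birkhoffSum S f n (S^[j] p) =
      n * birkhoffSum S f N p +
        ∑ i ∈ Finset.range n, (birkhoffSum S f i (S^[N] p) - birkhoffSum S f i p) := by
  have hswap : ∑ j ∈ Finset.range N, birkhoffSum S f n (S^[j] p) =
      ∑ i ∈ Finset.range n, birkhoffSum S f N (S^[i] p) := by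
    simp only [birkhoffSum]
    rw [Finset.sum_comm]
    refine Finset.sum_congr rfl fun i _ => Finset.sum_congr rfl fun j _ => ?_
    rw [← Function.iterate_add_apply, ← Function.iterate_add_apply, add_comm]
  have hterm : ∀ i, birkhoffSum S f N (S^[i] p) = birkhoffSum S f N p +
      (birkhoffSum S f i (S^[N] p) - birkhoffSum S f i p) := by
    intro i
    have h1 := birkhoffSum_add S f i N p
    have h2 := birkhoffSum_add S f N i p
    rw [add_comm] at h2
    linarith
  rw [hswap, Finset.sum_congr rfl fun i _ => hterm i, Finset.sum_add_distrib]
  simp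

variable [MeasurableSpace Ω] [MeasurableSpace X] {μ : Measure Ω}

lemma map_fst_map_iterate_skewProduct (hT : MeasurePreserving T μ μ)
    (hS : Measurable (skewProduct T g)) {ν : Measure (Ω × X)} (hν : ν.map Prod.fst = μ) (n : ℕ) :
    (ν.map (skewProduct T g)^[n]).map Prod.fst = μ := by
  have hcomp : Prod.fst ∘ (skewProduct T g)^[n] = T^[n] ∘ Prod.fst :=
    funext fun p => fst_iterate_skewProduct n p
  rw [Measure.map_map measurable_fst (hS.iterate n), hcomp,
    ← Measure.map_map (hT.measurable.iterate n) measurable_fst, hν, (hT.iterate n).map_eq]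

variable [MetricSpace X]

lemma IsCaratheodory.comp_skewProduct (hf : IsCaratheodory μ f) (hT : MeasurePreserving T μ μ)
    (hS : Measurable (skewProduct T g)) (hg : ∀ᵐ ω ∂μ, Continuous (g ω)) :
    IsCaratheodory μ (f ∘ skewProduct T g) where
  measurable := hf.measurable.comp hS
  ae_continuous := by
    filter_upwards [hT.quasiMeasurePreserving.ae hf.ae_continuous, hg] with ω h1 h2
    exact h1.comp h2
  exists_bound := by
    obtain ⟨b, hb, hle⟩ := hf.exists_bound
    refine ⟨b ∘ T, hT.integrable_comp_of_integrable hb, ?_⟩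
    filter_upwards [hT.quasiMeasurePreserving.ae hle] with ω hω x using hω _

lemma IsCaratheodory.birkhoffSum_skewProduct (hf : IsCaratheodory μ f) (hT : MeasurePreserving T μ μ)
    (hS : Measurable (skewProduct T g)) (hg : ∀ᵐ ω ∂μ, Continuous (g ω)) (n : ℕ) :
    IsCaratheodory μ (birkhoffSum (skewProduct T g) f n) := by
  have hiter : ∀ i, IsCaratheodory μ fun p => f ((skewProduct T g)^[i] p) := by
    intro i
    induction i with
    | zero => exact hf
    | succ i ih => exact ih.comp_skewProduct hT hS hg
  exact IsCaratheodory.sum fun i _ => hiter i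

variable [CompactSpace X] [Nonempty X]

/-- Subadditivity of the fibrewise suprema of Birkhoff sums. -/
lemma ae_iSup_birkhoffSum_add_le (hf : IsCaratheodory μ f) (hT : MeasurePreserving T μ μ)
    (hS : Measurable (skewProduct T g)) (hg : ∀ᵐ ω ∂μ, Continuous (g ω)) (n m : ℕ) :
    ∀ᵐ ω ∂μ, ⨆ x, birkhoffSum (skewProduct T g) f (n + m) (ω, x) ≤
      (⨆ x, birkhoffSum (skewProduct T g) f n (ω, x)) +
        ⨆ x, birkhoffSum (skewProduct T g) f m (T^[n] ω, x) := by
  filter_upwards [(hf.birkhoffSum_skewProduct hT hS hg n).ae_le_iSup,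
    (hT.iterate n).quasiMeasurePreserving.ae (hf.birkhoffSum_skewProduct hT hS hg m).ae_le_iSup] with ω h1 h2
  refine ciSup_le fun x => ?_
  rw [birkhoffSum_skewProduct_add]
  exact add_le_add (h1 x) (h2 _)

/-- The asymptotic growth of the fibrewise suprema is at most their normalized mean at any time. -/
lemma ae_eventually_iSup_birkhoffSum_div_lt [IsProbabilityMeasure μ] (hf : IsCaratheodory μ f)
    (hT : Ergodic T μ) (hS : Measurable (skewProduct T g)) (hg : ∀ᵐ ω ∂μ, Continuous (g ω))
    {n : ℕ} (hn : 0 < n) {c : ℝ}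
    (hc : (∫ ω, ⨆ x, birkhoffSum (skewProduct T g) f n (ω, x) ∂μ) / n < c) :
    ∀ᵐ ω ∂μ, ∀ᶠ N : ℕ in atTop,
      (⨆ x, birkhoffSum (skewProduct T g) f N (ω, x)) / N < c := by
  obtain ⟨b, hb, hle⟩ := hf.exists_bound
  have hmp := hT.toMeasurePreserving
  have hcn := hf.birkhoffSum_skewProduct hmp hS hg n
  filter_upwards [hT.ae_tendsto_birkhoffSum_div hcn.integrable_iSup,
    hT.ae_tendsto_birkhoffSum_div hb, ae_forall_iterate hmp hcn.ae_le_iSup,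
    ae_forall_iterate hmp hle] with ω hF hB hsup hbound
  set F : Ω → ℝ := fun ω => ⨆ x, birkhoffSum (skewProduct T g) f n (ω, x)
  set B : ℕ → ℝ := fun k => birkhoffSum T b k ω with hBdef
  have hn' : (0 : ℝ) < n := Nat.cast_pos.2 hn
  have hpoint : ∀ (N i : ℕ) (x : X), i ≤ n →
      |birkhoffSum (skewProduct T g) f i ((skewProduct T g)^[N] (ω, x))| ≤ B (N + n) - B N := by
    intro N i x hi
    have hBN : B (N + n) - B N = birkhoffSum T b n (T^[N] ω) := by
      simp only [hBdef, birkhoffSum_add]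
      ring
    have hterm : ∀ k, |f ((skewProduct T g)^[k] ((skewProduct T g)^[N] (ω, x)))| ≤
        b (T^[k] (T^[N] ω)) := by
      intro k
      rw [← Function.iterate_add_apply, ← Function.iterate_add_apply, iterate_skewProduct_eq]
      exact hbound (k + N) _
    rw [hBN]
    refine (Finset.abs_sum_le_sum_abs _ _).trans ((Finset.sum_le_sum fun k _ => hterm k).trans ?_)
    exact Finset.sum_le_sum_of_subset_of_nonneg (Finset.range_subset_range.2 hi)
      fun k _ _ => (abs_nonneg _).trans (hterm k)
  have hupper : ∀ N : ℕ, ⨆ x, birkhoffSum (skewProduct T g) f N (ω, x) ≤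
      birkhoffSum T F N ω / n + (B (N + n) - B N) + B n := by
    intro N
    refine ciSup_le fun x => ?_
    have hsum := sum_birkhoffSum_iterate (skewProduct T g) f n N (ω, x)
    have h1 : ∑ j ∈ Finset.range N,
        birkhoffSum (skewProduct T g) f n ((skewProduct T g)^[j] (ω, x)) ≤ birkhoffSum T F N ω := by
      refine Finset.sum_le_sum fun j _ => ?_
      rw [iterate_skewProduct_eq]
      exact hsup j _
    have h2 : -(n * (B (N + n) - B N + B n)) ≤ ∑ i ∈ Finset.range n,
        (birkhoffSum (skewProduct T g) f i ((skewProduct T g)^[N] (ω, x)) -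
          birkhoffSum (skewProduct T g) f i (ω, x)) := by
      have : -(n * (B (N + n) - B N + B n)) =
          ∑ i ∈ Finset.range n, -(B (N + n) - B N + B n) := by
        rw [Finset.sum_const, Finset.card_range, nsmul_eq_mul, mul_neg]
      rw [this]
      refine Finset.sum_le_sum fun i hi => ?_
      have hi' := (Finset.mem_range.1 hi).le
      have h3 := abs_le.1 (hpoint N i x hi')
      have h4 := abs_le.1 (hpoint 0 i x hi')
      simp only [Function.iterate_zero, id_eq, zero_add] at h4
      have h5 : B 0 = 0 := birkhoffSum_zero T b ω
      linarith [h3.1, h4.2]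
    have h3 : birkhoffSum T F N ω / n * n = birkhoffSum T F N ω := div_mul_cancel₀ _ hn'.ne'
    refine le_of_mul_le_mul_left ?_ hn'
    linarith
  have hBn : Tendsto (fun N : ℕ => (B (N + n) - B N) / N) atTop (𝓝 0) := by
    have h1 : Tendsto (fun N : ℕ => B (N + n) / ((N + n : ℕ) : ℝ)) atTop (𝓝 (∫ y, b y ∂μ)) :=
      hB.comp (tendsto_add_atTop_nat n)
    have h2 : Tendsto (fun N : ℕ => 1 + (n : ℝ) / N) atTop (𝓝 (1 + 0)) :=
      tendsto_const_nhds.add (tendsto_const_nhds.div_atTop tendsto_natCast_atTop_atTop)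
    have h3 := (h1.mul h2).sub hB
    simp only [add_zero, mul_one, sub_self] at h3
    refine h3.congr' ?_
    filter_upwards [eventually_gt_atTop 0] with N hN
    have hN' : (N : ℝ) ≠ 0 := Nat.cast_ne_zero.2 hN.ne'
    have hNn : (N : ℝ) + n ≠ 0 := by positivity
    push_cast
    simp only [hBdef]
    field_simp
  have hlim : Tendsto (fun N : ℕ => birkhoffSum T F N ω / N / n + (B (N + n) - B N) / N + B n / N)
      atTop (𝓝 ((∫ ω, F ω ∂μ) / n + 0 + 0)) :=
    ((hF.div_const _).add hBn).add (tendsto_const_nhds.div_atTop tendsto_natCast_atTop_atTop)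
  rw [add_zero, add_zero] at hlim
  filter_upwards [hlim.eventually_lt_const hc, eventually_gt_atTop 0] with N hN hN0
  refine lt_of_le_of_lt ?_ hN
  have hN' : (0 : ℝ) < N := Nat.cast_pos.2 hN0
  rw [div_right_comm, ← add_div, ← add_div]
  exact div_le_div_of_nonneg_right (hupper N) hN'.le

/-- The fibrewise suprema grow at least at the rate of the integral of `f` against any invariant
measure with marginal `μ`. -/
lemma ae_bddBelow_iSup_birkhoffSum_sub [IsProbabilityMeasure μ] (hf : IsCaratheodory μ f)
    (hT : Ergodic T μ) (hS : Measurable (skewProduct T g)) (hg : ∀ᵐ ω ∂μ, Continuous (g ω))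
    {η : Measure (Ω × X)} [IsProbabilityMeasure η] (hη : MeasurePreserving (skewProduct T g) η η)
    (hfst : η.map Prod.fst = μ) {c : ℝ} (hc : c < ∫ p, f p ∂η) :
    ∀ᵐ ω ∂μ, BddBelow (Set.range fun N : ℕ =>
      (⨆ x, birkhoffSum (skewProduct T g) f N (ω, x)) - N * c) := by
  have hmp := hT.toMeasurePreserving
  have hcar := hf.birkhoffSum_skewProduct hmp hS hg
  set F : ℕ → Ω → ℝ := fun N ω => ⨆ x, birkhoffSum (skewProduct T g) f N (ω, x)
  set E : Set Ω := {ω | BddAbove (Set.range fun N : ℕ => N * c - F N ω)}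
  have hEm : NullMeasurableSet E μ := nullMeasurableSet_bddAbove_range fun N =>
    (hcar N).integrable_iSup.aemeasurable.const_sub _
  have hle : E ≤ᵐ[μ] T ⁻¹' E := by
    have hsub : ∀ᵐ ω ∂μ, ∀ N, F (1 + N) ω ≤ F 1 ω + F N (T ω) :=
      ae_all_iff.2 fun N => ae_iSup_birkhoffSum_add_le hf hmp hS hg 1 N
    filter_upwards [hsub] with ω hω hb
    obtain ⟨B, hB⟩ := hb
    refine ⟨B + F 1 ω - c, ?_⟩
    rintro _ ⟨N, rfl⟩
    have h1 : ((1 + N : ℕ) : ℝ) * c - F (1 + N) ω ≤ B := hB ⟨1 + N, rfl⟩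
    have h2 := hω N
    push_cast at h1
    simp only
    linarith
  rcases hT.ae_empty_or_univ_of_ae_le_preimage hEm hle with h | h
  · exfalso
    rw [← hfst] at h
    have hsup : ∀ᵐ ω ∂(η.map Prod.fst), ∀ N x,
        birkhoffSum (skewProduct T g) f N (ω, x) ≤ F N ω := by
      rw [hfst]
      exact ae_all_iff.2 fun N => (hcar N).ae_le_iSup
    have hpos : ∀ᵐ p ∂η, ∃ N, 0 < birkhoffSum (skewProduct T g) (fun q => c - f q) N p := by
      filter_upwards [ae_of_ae_map measurable_fst.aemeasurable h,
        ae_of_ae_map measurable_fst.aemeasurable hsup] with p hp hp'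
      have hpE : (p.1 ∈ E) = False := hp
      obtain ⟨_, ⟨N, rfl⟩, hN⟩ := not_bddAbove_iff.1 (of_eq_false hpE) 0
      refine ⟨N, ?_⟩
      have h1 : birkhoffSum (skewProduct T g) (fun q => c - f q) N p =
          N * c - birkhoffSum (skewProduct T g) f N p := by
        simp [birkhoffSum, Finset.sum_sub_distrib]
      have h2 := hp' N p.2
      rw [h1]
      simp only at hN h2
      linarith
    have hfint := hf.integrable hfst
    have hint : 0 ≤ ∫ p, (c - f p) ∂η := integral_nonneg_of_ae_exists_birkhoffSum_pos hη
      ((integrable_const c).sub hfint) hpos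
    rw [integral_sub (integrable_const c) hfint, integral_const, probReal_univ, one_smul] at hint
    linarith
  · filter_upwards [h] with ω hω
    have hωE : (ω ∈ E) = True := hω
    obtain ⟨B, hB⟩ := of_eq_true hωE
    refine ⟨-B, ?_⟩
    rintro _ ⟨N, rfl⟩
    have h1 : N * c - F N ω ≤ B := hB ⟨N, rfl⟩
    simp only
    linarith

end SkewProduct

section InvariantMeasure

variable {Ω X : Type*} [MeasurableSpace Ω] [MeasurableSpace X]
  {μ : Measure Ω} {T : Ω → Ω} {g : Ω → X → X} {f : Ω × X → ℝ}

/-- The average of the push-forwards of `ν` under the first `N` iterates of `S`. -/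
noncomputable def orbitAverage {α : Type*} [MeasurableSpace α] (S : α → α) (ν : Measure α)
    (N : ℕ) : Measure α :=
  (N : ENNReal)⁻¹ • ∑ i ∈ Finset.range N, ν.map S^[i]

lemma isProbabilityMeasure_orbitAverage {α : Type*} [MeasurableSpace α] {S : α → α}
    (hS : Measurable S) {ν : Measure α} [IsProbabilityMeasure ν] {N : ℕ} (hN : 0 < N) :
    IsProbabilityMeasure (orbitAverage S ν N) := by
  constructor
  have hone : ∀ i, ν.map S^[i] Set.univ = 1 := fun i =>
    (Measure.isProbabilityMeasure_map (hS.iterate i).aemeasurable).measure_univ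
  simp only [orbitAverage, Measure.smul_apply, Measure.finsetSum_apply, hone, Finset.sum_const,
    Finset.card_range, nsmul_eq_mul, mul_one, smul_eq_mul]
  exact ENNReal.inv_mul_cancel (Nat.cast_ne_zero.2 hN.ne') (ENNReal.natCast_ne_top N)

lemma map_fst_orbitAverage (hT : MeasurePreserving T μ μ) (hS : Measurable (skewProduct T g))
    {ν : Measure (Ω × X)} (hν : ν.map Prod.fst = μ) {N : ℕ} (hN : 0 < N) :
    (orbitAverage (skewProduct T g) ν N).map Prod.fst = μ := by
  have hsum : (∑ i ∈ Finset.range N, ν.map (skewProduct T g)^[i]).map Prod.fst =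
      ∑ i ∈ Finset.range N, μ := by
    ext s hs
    have h : ∀ i, (ν.map (skewProduct T g)^[i]) (Prod.fst ⁻¹' s) = μ s := fun i => by
      rw [← Measure.map_apply measurable_fst hs, map_fst_map_iterate_skewProduct hT hS hν]
    rw [Measure.map_apply measurable_fst hs, Measure.finsetSum_apply, Measure.finsetSum_apply]
    exact Finset.sum_congr rfl fun i _ => h i
  rw [orbitAverage, Measure.map_smul, hsum, Finset.sum_const, Finset.card_range,
    ← Nat.cast_smul_eq_nsmul ENNReal, smul_smul,
    ENNReal.inv_mul_cancel (Nat.cast_ne_zero.2 hN.ne') (ENNReal.natCast_ne_top N), one_smul]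

variable [MetricSpace X]

lemma IsCaratheodory.integral_orbitAverage (hf : IsCaratheodory μ f)
    (hT : MeasurePreserving T μ μ) (hS : Measurable (skewProduct T g)) {ν : Measure (Ω × X)}
    (hν : ν.map Prod.fst = μ) (N : ℕ) :
    ∫ p, f p ∂(orbitAverage (skewProduct T g) ν N) =
      (∫ p, birkhoffSum (skewProduct T g) f N p ∂ν) / N := by
  have hint : ∀ i, Integrable f (ν.map (skewProduct T g)^[i]) := fun i =>
    hf.integrable (map_fst_map_iterate_skewProduct hT hS hν i)
  have hsum : ∫ p, birkhoffSum (skewProduct T g) f N p ∂ν =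
      ∑ i ∈ Finset.range N, ∫ p, f ((skewProduct T g)^[i] p) ∂ν :=
    integral_finsetSum _ fun i _ => (hint i).comp_measurable (hS.iterate i)
  rw [orbitAverage, integral_smul_measure, integral_finsetSum_measure fun i _ => hint i, hsum,
    ENNReal.toReal_inv, ENNReal.toReal_natCast, smul_eq_mul, div_eq_inv_mul]
  congr 1
  refine Finset.sum_congr rfl fun i _ => ?_
  rw [integral_map (hS.iterate i).aemeasurable hf.measurable.aestronglyMeasurable]

variable [CompactSpace X] [BorelSpace X]

lemma isCompact_closure_setOf_map_fst_eq [TopologicalSpace Ω] [PolishSpace Ω] [BorelSpace Ω]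
    [IsProbabilityMeasure μ] :
    IsCompact (closure {η : ProbabilityMeasure (Ω × X) |
      (η : Measure (Ω × X)).map Prod.fst = μ}) := by
  refine isCompact_closure_of_isTightMeasureSet (IsTightMeasureSet.prodMk ?_ .of_compactSpace)
  refine (isTightMeasureSet_singleton (μ := μ)).subset ?_
  rintro _ ⟨_, ⟨η, hη, rfl⟩, rfl⟩
  exact hη

variable [Nonempty X]

/-- An invariant measure over `μ` whose integral of `f` is, up to any `ε`, at least some normalized
mean of the fibrewise suprema. -/
lemma exists_invariant_measure_integral_ge [StandardBorelSpace Ω] [IsProbabilityMeasure μ]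
    (hf : IsCaratheodory μ f) (hT : MeasurePreserving T μ μ) (hS : Measurable (skewProduct T g))
    (hg : ∀ᵐ ω ∂μ, Continuous (g ω)) :
    ∃ η : Measure (Ω × X), IsProbabilityMeasure η ∧ MeasurePreserving (skewProduct T g) η η ∧
      η.map Prod.fst = μ ∧ ∀ c, ∫ p, f p ∂η < c → ∃ n : ℕ, 0 < n ∧
        (∫ ω, ⨆ x, birkhoffSum (skewProduct T g) f n (ω, x) ∂μ) / n < c := by
  obtain ⟨τ, hborel, hpolish⟩ := StandardBorelSpace.polish (α := Ω)
  choose ν hνprob hνfst hν using fun n =>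
    (hf.birkhoffSum_skewProduct hT hS hg n).exists_measure_integral_ge
  let ηs : ℕ → ProbabilityMeasure (Ω × X) := fun n =>
    ⟨orbitAverage (skewProduct T g) (ν (n + 1)) (n + 1),
      isProbabilityMeasure_orbitAverage hS n.succ_pos⟩
  have hηs : ∀ n, (ηs n : Measure (Ω × X)).map Prod.fst = μ := fun n =>
    map_fst_orbitAverage hT hS (hνfst _) n.succ_pos
  have hηsint : ∀ {ψ : Ω × X → ℝ}, IsCaratheodory μ ψ → ∀ n,
      ∫ p, ψ p ∂(ηs n : Measure (Ω × X)) =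
        (∫ p, birkhoffSum (skewProduct T g) ψ (n + 1) p ∂(ν (n + 1))) / ((n + 1 : ℕ) : ℝ) :=
    fun hψ n => hψ.integral_orbitAverage hT hS (hνfst _) _
  let U : Ultrafilter ℕ := Filter.hyperfilter ℕ
  have hU : (U : Filter ℕ) ≤ atTop := Nat.hyperfilter_le_atTop
  obtain ⟨η, -, hη⟩ := (isCompact_closure_setOf_map_fst_eq (X := X) (μ := μ)).ultrafilter_le_nhds
    (U.map ηs) (by
      rw [le_principal_iff, Ultrafilter.coe_map, mem_map]
      exact Eventually.of_forall fun n => subset_closure (hηs n))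
  have hlim : Tendsto ηs U (𝓝 η) := hη
  have hηfst : (η : Measure (Ω × X)).map Prod.fst = μ := by
    have h1 : Tendsto (fun n => (ηs n).map (measurable_fst.aemeasurable)) U
        (𝓝 (η.map (measurable_fst.aemeasurable))) :=
      ((ProbabilityMeasure.continuous_map continuous_fst).tendsto η).comp hlim
    have h2 : ∀ n, (ηs n).map (measurable_fst.aemeasurable) =
        (⟨μ, inferInstance⟩ : ProbabilityMeasure Ω) := fun n => Subtype.ext (hηs n)
    simp only [h2] at h1
    have h3 : η.map (measurable_fst.aemeasurable) = (⟨μ, inferInstance⟩ : ProbabilityMeasure Ω) :=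
      tendsto_nhds_unique h1 tendsto_const_nhds
    exact congrArg Subtype.val h3
  have hsmall : ∀ C : ℝ, Tendsto (fun n : ℕ => C / ((n + 1 : ℕ) : ℝ)) U (𝓝 0) := fun C =>
    ((tendsto_const_nhds.div_atTop tendsto_natCast_atTop_atTop).comp
      (tendsto_add_atTop_nat 1)).mono_left hU
  refine ⟨η, inferInstance, ⟨hS, ?_⟩, hηfst, fun c hc => ?_⟩
  · have : IsProbabilityMeasure ((η : Measure (Ω × X)).map (skewProduct T g)) :=
      Measure.isProbabilityMeasure_map hS.aemeasurable
    refine ext_of_forall_integral_eq_of_IsFiniteMeasure fun ψ => ?_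
    rw [integral_map hS.aemeasurable ψ.continuous.measurable.aestronglyMeasurable]
    have hψ : IsCaratheodory μ ψ :=
      ⟨ψ.continuous.measurable, Eventually.of_forall fun ω => by fun_prop, fun _ => ‖ψ‖,
        integrable_const _, Eventually.of_forall fun ω x => ψ.norm_coe_le_norm (ω, x)⟩
    have hψS := hψ.comp_skewProduct hT hS hg
    have h1 := hψS.tendsto_integral hlim hηs hηfst
    have h2 := hψ.tendsto_integral hlim hηs hηfst
    have hdiff : Tendsto (fun n => ∫ p, (ψ ∘ skewProduct T g) p ∂(ηs n : Measure (Ω × X)) -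
        ∫ p, ψ p ∂(ηs n : Measure (Ω × X))) U (𝓝 0) := by
      refine squeeze_zero_norm (fun n => ?_) (hsmall (2 * ‖ψ‖))
      have hprob := hνprob (n + 1)
      rw [hηsint hψS, hηsint hψ, ← sub_div, norm_div, Real.norm_natCast,
        ← integral_sub ((hψS.birkhoffSum_skewProduct hT hS hg _).integrable (hνfst _))
          ((hψ.birkhoffSum_skewProduct hT hS hg _).integrable (hνfst _))]
      refine div_le_div_of_nonneg_right ?_ (Nat.cast_nonneg _)
      have hbd : ∀ p, ‖birkhoffSum (skewProduct T g) (ψ ∘ skewProduct T g) (n + 1) p -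
          birkhoffSum (skewProduct T g) ψ (n + 1) p‖ ≤ 2 * ‖ψ‖ := by
        intro p
        have h : birkhoffSum (skewProduct T g) (ψ ∘ skewProduct T g) (n + 1) p =
            birkhoffSum (skewProduct T g) ψ (n + 1) (skewProduct T g p) := by
          refine Finset.sum_congr rfl fun i _ => ?_
          rw [Function.comp_apply, ← Function.iterate_succ_apply' (skewProduct T g),
            Function.iterate_succ_apply]
        rw [h, birkhoffSum_apply_sub_birkhoffSum, two_mul]
        exact (norm_sub_le _ _).trans
          (add_le_add (ψ.norm_coe_le_norm _) (ψ.norm_coe_le_norm _))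
      have h := norm_integral_le_of_norm_le_const (μ := ν (n + 1)) (Eventually.of_forall hbd)
      rwa [probReal_univ, mul_one] at h
    exact sub_eq_zero.1 (tendsto_nhds_unique (h1.sub h2) hdiff)
  · have h := (hf.tendsto_integral hlim hηs hηfst).add (hsmall 1)
    rw [add_zero] at h
    obtain ⟨n, hn⟩ := (h.eventually_lt_const hc).exists
    refine ⟨n + 1, n.succ_pos, lt_of_le_of_lt ?_ hn⟩
    rw [hηsint hf, ← add_div]
    refine div_le_div_of_nonneg_right ?_ (Nat.cast_nonneg _)
    linarith [hν (n + 1)]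

end InvariantMeasure

/-- **Fibered maximizing invariant measures for subadditive Birkhoff suprema over skew
products.** -/
theorem exists_maximizing_invariant_measure_skew_product
    {Ω : Type*} [MeasurableSpace Ω] [StandardBorelSpace Ω]
    {μ : Measure Ω} [IsProbabilityMeasure μ]
    {T : Ω → Ω} (hT : Ergodic T μ)
    {X : Type*} [MetricSpace X] [CompactSpace X] [Nonempty X]
    [MeasurableSpace X] [BorelSpace X]
    (g : Ω → X → X)
    (hS : Measurable fun p : Ω × X => ((T p.1, g p.1 p.2) : Ω × X))
    (hhomeo : ∀ᵐ ω ∂μ, ∃ e : X ≃ₜ X, ⇑e = g ω)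
    (f : Ω × X → ℝ) (hfmeas : Measurable f)
    (hfcont : ∀ᵐ ω ∂μ, Continuous fun x => f (ω, x))
    (hfint : Integrable (fun ω => ⨆ x : X, |f (ω, x)|) μ) :
    (∀ n m : ℕ, 1 ≤ n → 1 ≤ m → ∀ᵐ ω ∂μ,
      (⨆ x : X, ∑ i ∈ Finset.range (n + m),
          f ((fun p : Ω × X => (T p.1, g p.1 p.2))^[i] (ω, x)))
        ≤ (⨆ x : X, ∑ i ∈ Finset.range n,
            f ((fun p : Ω × X => (T p.1, g p.1 p.2))^[i] (ω, x)))
          + (⨆ x : X, ∑ i ∈ Finset.range m,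
              f ((fun p : Ω × X => (T p.1, g p.1 p.2))^[i] (T^[n] ω, x)))) ∧
    ∃ l : ℝ,
      (∀ᵐ ω ∂μ,
        Tendsto
          (fun N : ℕ =>
            (⨆ x : X, ∑ i ∈ Finset.range N,
              f ((fun p : Ω × X => (T p.1, g p.1 p.2))^[i] (ω, x))) / (N : ℝ))
          atTop (𝓝 l)) ∧
      ∃ η : Measure (Ω × X), IsProbabilityMeasure η ∧
        MeasurePreserving (fun p : Ω × X => (T p.1, g p.1 p.2)) η η ∧
        η.map Prod.fst = μ ∧
        l ≤ ∫ p, f p ∂η := by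
  have hg : ∀ᵐ ω ∂μ, Continuous (g ω) := by
    filter_upwards [hhomeo] with ω ⟨e, he⟩
    exact he ▸ e.continuous
  have hSm : Measurable (skewProduct T g) := hS
  have hmp := hT.toMeasurePreserving
  have hf : IsCaratheodory μ f := by
    refine ⟨hfmeas, hfcont, _, hfint, ?_⟩
    filter_upwards [hfcont] with ω hω x
    exact le_ciSup (f := fun y => |f (ω, y)|) (isCompact_range hω.abs).bddAbove x
  refine ⟨fun n m _ _ => ae_iSup_birkhoffSum_add_le hf hmp hSm hg n m, ?_⟩
  obtain ⟨η, hprob, hη, hfst, hup⟩ := exists_invariant_measure_integral_ge hf hmp hSm hg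
  refine ⟨∫ p, f p ∂η, ?_, η, hprob, hη, hfst, le_rfl⟩
  have hupper : ∀ᵐ ω ∂μ, ∀ q : ℚ, ∫ p, f p ∂η < q → ∀ᶠ N : ℕ in atTop,
      (⨆ x, birkhoffSum (skewProduct T g) f N (ω, x)) / N < q := by
    rw [ae_all_iff]
    intro q
    by_cases hq : ∫ p, f p ∂η < q
    · obtain ⟨n, hn, hnq⟩ := hup q hq
      filter_upwards [ae_eventually_iSup_birkhoffSum_div_lt hf hT hSm hg hn hnq] with ω hω _
      exact hω
    · exact Eventually.of_forall fun ω h => absurd h hq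
  have hlower : ∀ᵐ ω ∂μ, ∀ q : ℚ, q < ∫ p, f p ∂η → BddBelow (Set.range fun N : ℕ =>
      (⨆ x, birkhoffSum (skewProduct T g) f N (ω, x)) - N * q) := by
    rw [ae_all_iff]
    intro q
    by_cases hq : q < ∫ p, f p ∂η
    · filter_upwards [ae_bddBelow_iSup_birkhoffSum_sub hf hT hSm hg hη hfst hq] with ω hω _
      exact hω
    · exact Eventually.of_forall fun ω h => absurd h hq
  filter_upwards [hupper, hlower] with ω h1 h2
  exact tendsto_order.2 ⟨fun a ha => eventually_lt_div_natCast_of_bddBelow h2 ha, fun a ha => by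
    obtain ⟨q, hq, hqa⟩ := exists_rat_btwn ha
    filter_upwards [h1 q hq] with N hN using hN.trans hqa⟩
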